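/- Let (X,f) be a TDS and φ, ψ ∈ C(X,ℝ) with ψ > 0. Then P_ψ(φ) = inf{ β ∈ ℝ : P(φ − βψ) ≤ 0 } = sup{ β ∈ ℝ : P(φ − βψ) ≥ 0 }. -/

import Mathlib

open MeasureTheory Filter Topology Set

variable {X : Type*}

/-- Birkhoff sum `S_n φ (x) = ∑_{i<n} φ(f^i x)`. -/
noncomputable def birkhoff (f : X → X) (φ : X → ℝ) (n : ℕ) (x : X) : ℝ :=
  ∑ i ∈ Finset.range n, φ (f^[i] x)

/-- The `n`-th Bowen metric. -/
noncomputable def dynDist [MetricSpace X] (f : X → X) (n : ℕ) (x y : X) : ℝ :=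
  ⨆ i : Fin n, dist (f^[(i : ℕ)] x) (f^[(i : ℕ)] y)

/-- `F` is an `(n,ε)`-spanning set of `Z`. -/
def IsSpanningSet [MetricSpace X] (f : X → X) (n : ℕ) (ε : ℝ) (Z : Set X) (F : Finset X) : Prop :=
  ∀ y ∈ Z, ∃ x ∈ F, dynDist f n x y ≤ ε

/-- `E` is `(n,ε)`-separated. -/
def IsSeparatedSet [MetricSpace X] (f : X → X) (n : ℕ) (ε : ℝ) (E : Finset X) : Prop :=
  ∀ x ∈ E, ∀ y ∈ E, x ≠ y → ε < dynDist f n x y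

/-- `S_T = {n : ∃ x, S_n ψ(x) ≤ T < S_{n+1} ψ(x)}`. -/
def STset (f : X → X) (ψ : X → ℝ) (T : ℝ) : Set ℕ :=
  {n | ∃ x : X, birkhoff f ψ n x ≤ T ∧ T < birkhoff f ψ (n + 1) x}

/-- `X_n = {x : S_n ψ(x) ≤ T < S_{n+1} ψ(x)}`. -/
def Xset (f : X → X) (ψ : X → ℝ) (T : ℝ) (n : ℕ) : Set X :=
  {x | birkhoff f ψ n x ≤ T ∧ T < birkhoff f ψ (n + 1) x}

/-- `Q_{ψ,T}(f,φ,ε)`, the spanning-set quantity. -/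
noncomputable def Qspan [MetricSpace X] (f : X → X) (φ ψ : X → ℝ) (T ε : ℝ) : ℝ :=
  sInf { r : ℝ | ∃ F : ℕ → Finset X,
    (∀ n ∈ STset f ψ T, IsSpanningSet f n ε (Xset f ψ T n) (F n)) ∧
    r = ∑' n : ℕ, Set.indicator (STset f ψ T)
        (fun n => ∑ x ∈ F n, Real.exp (birkhoff f φ n x)) n }

/-- `P_{ψ,T}(f,φ,ε)`, the separated-set quantity. -/
noncomputable def Psep [MetricSpace X] (f : X → X) (φ ψ : X → ℝ) (T ε : ℝ) : ℝ :=
  sSup { r : ℝ | ∃ E : ℕ → Finset X,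
    (∀ n ∈ STset f ψ T, (E n : Set X) ⊆ Xset f ψ T n ∧ IsSeparatedSet f n ε (E n)) ∧
    r = ∑' n : ℕ, Set.indicator (STset f ψ T)
        (fun n => ∑ x ∈ E n, Real.exp (birkhoff f φ n x)) n }

/-- The `ψ`-induced topological pressure of `φ`. -/
noncomputable def inducedPressure [MetricSpace X] (f : X → X) (φ ψ : X → ℝ) : EReal :=
  ⨆ (ε : ℝ) (_ : 0 < ε),
    Filter.limsup (fun T : ℝ => ((T⁻¹ * Real.log (Qspan f φ ψ T ε) : ℝ) : EReal)) atTop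

/-- Largest sum over `(n,ε)`-separated sets of `X`. -/
noncomputable def sepSum [MetricSpace X] (f : X → X) (φ : X → ℝ) (n : ℕ) (ε : ℝ) : ℝ :=
  sSup { r : ℝ | ∃ E : Finset X, IsSeparatedSet f n ε E ∧
    r = ∑ x ∈ E, Real.exp (birkhoff f φ n x) }

/-- The classical (Walters) topological pressure. -/
noncomputable def topPressure [MetricSpace X] (f : X → X) (φ : X → ℝ) : EReal :=
  ⨆ (ε : ℝ) (_ : 0 < ε),
    Filter.limsup (fun n : ℕ => (((n : ℝ)⁻¹ * Real.log (sepSum f φ n ε) : ℝ) : EReal)) atTop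

/-!
The curve `β ↦ P(φ - βψ)` crosses zero exactly at `β = P_ψ(φ)`.
* The crossing is strict: if `ψ ≥ m > 0`, then raising `β` by `c` lowers the pressure by at least
  `c * m`.
* `P(φ - βψ) < 0` forces `P_ψ(φ) ≤ β`, because on `X_n` the sum `S_n ψ` equals `T` up to a constant,
  so that `exp (S_n φ)` is `exp (β T)` times `exp (S_n (φ - βψ))` up to a constant factor, and only
  `O(T)` times `n` occur in `S_T`.
* `P_ψ(φ) < β` forces `P(φ - βψ) ≤ 0`: for fixed `n` the sets `X_n` at the levels `T = k * m` cover
  `X`, only `O(n)` of them are nonempty, and the same comparison applies on each.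
-/

section ExponentialGrowth

theorem eventually_affine_le_exp (a b : ℝ) {c : ℝ} (hc : 0 < c) :
    ∀ᶠ x : ℝ in atTop, a * x + b ≤ Real.exp (c * x) := by
  have hlittle : (fun x : ℝ => a * x + b) =o[atTop] fun x => Real.exp (c * x) := by
    refine Asymptotics.IsLittleO.add ?_ ?_
    · simpa using (isLittleO_pow_exp_pos_mul_atTop 1 hc).const_mul_left a
    · simpa using (isLittleO_pow_exp_pos_mul_atTop 0 hc).const_mul_left b
  filter_upwards [hlittle.bound one_pos] with x hx
  rw [one_mul, Real.norm_eq_abs, Real.norm_of_nonneg (Real.exp_pos _).le] at hx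
  exact (le_abs_self _).trans hx

variable {α : Type*} {l : Filter α} {t q : α → ℝ}

theorem limsup_inv_mul_log_le (ht : Tendsto t l atTop) (hq : ∀ᶠ x in l, 0 < q x) {a b c : ℝ}
    (h : ∀ᶠ x in l, q x ≤ (a * t x + b) * Real.exp (c * t x)) :
    limsup (fun x => (((t x)⁻¹ * Real.log (q x) : ℝ) : EReal)) l ≤ c := by
  refine EReal.le_of_forall_lt_iff_le.1 fun d hcd => limsup_le_of_le (h := ?_)
  have hcd' : 0 < d - c := sub_pos.2 (EReal.coe_lt_coe_iff.1 hcd)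
  filter_upwards [hq, h, ht.eventually_gt_atTop 0,
    ht.eventually (eventually_affine_le_exp a b hcd')] with x hqx hx htx hexp
  have hqd : q x ≤ Real.exp (d * t x) :=
    calc q x ≤ (a * t x + b) * Real.exp (c * t x) := hx
      _ ≤ Real.exp ((d - c) * t x) * Real.exp (c * t x) := by gcongr
      _ = Real.exp (d * t x) := by rw [← Real.exp_add]; ring_nf
  rw [EReal.coe_le_coe_iff, inv_mul_le_iff₀ htx, mul_comm]
  exact (Real.log_le_iff_le_exp hqx).2 hqd

theorem eventually_lt_exp_of_limsup_inv_mul_log_lt (ht : Tendsto t l atTop) {c : ℝ}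
    (h : limsup (fun x => (((t x)⁻¹ * Real.log (q x) : ℝ) : EReal)) l < c) :
    ∀ᶠ x in l, q x < Real.exp (c * t x) := by
  filter_upwards [eventually_lt_of_limsup_lt h, ht.eventually_gt_atTop 0] with x hx htx
  rw [EReal.coe_lt_coe_iff, inv_mul_lt_iff₀ htx, mul_comm] at hx
  exact Real.lt_exp_of_log_lt hx

end ExponentialGrowth

theorem eq_sInf_and_eq_sSup_of_crossing {p : ℝ → EReal} {c : EReal}
    (hcross : ∀ ⦃β γ⦄, β < γ → p β ≤ 0 → p γ < 0) (hle : ∀ ⦃β : ℝ⦄, p β < 0 → c ≤ β)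
    (hlt : ∀ ⦃β : ℝ⦄, c < β → p β ≤ 0) :
    c = sInf {b : EReal | ∃ β : ℝ, b = β ∧ p β ≤ 0} ∧
      c = sSup {b : EReal | ∃ β : ℝ, b = β ∧ 0 ≤ p β} := by
  constructor <;> apply le_antisymm
  · refine le_sInf ?_
    rintro _ ⟨β, rfl, hβ⟩
    exact EReal.le_of_forall_lt_iff_le.1 fun γ hγ => hle (hcross (EReal.coe_lt_coe_iff.1 hγ) hβ)
  · exact EReal.le_of_forall_lt_iff_le.1 fun γ hγ => sInf_le ⟨γ, rfl, hlt hγ⟩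
  · exact EReal.ge_of_forall_gt_iff_ge.1 fun γ hγ =>
      le_sSup ⟨γ, rfl, not_lt.1 fun hneg => hγ.not_ge (hle hneg)⟩
  · refine sSup_le ?_
    rintro _ ⟨β, rfl, hβ⟩
    by_contra! hcβ
    obtain ⟨γ, hcγ, hγβ⟩ := EReal.lt_iff_exists_real_btwn.1 hcβ
    exact hβ.not_gt (hcross (EReal.coe_lt_coe_iff.1 hγβ) (hlt hcγ))

theorem exists_pos_forall_mem_Icc [TopologicalSpace X] [CompactSpace X] {ψ : X → ℝ}
    (hψ : Continuous ψ) (hpos : ∀ x, 0 < ψ x) : ∃ m M : ℝ, 0 < m ∧ ∀ x, ψ x ∈ Icc m M := by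
  obtain ⟨m, hm, hmψ⟩ := isCompact_univ.exists_forall_le' hψ.continuousOn fun x _ => hpos x
  obtain ⟨M, hM⟩ := (isCompact_range hψ).bddAbove
  exact ⟨m, M, hm, fun x => ⟨hmψ x (mem_univ x), hM (mem_range_self x)⟩⟩

section BirkhoffSum

variable {f : X → X} {φ ψ : X → ℝ}

theorem birkhoff_succ (f : X → X) (φ : X → ℝ) (n : ℕ) (x : X) :
    birkhoff f φ (n + 1) x = birkhoff f φ n x + φ (f^[n] x) :=
  birkhoffSum_succ f φ n x

theorem birkhoff_sub_const_mul (f : X → X) (φ ψ : X → ℝ) (β : ℝ) (n : ℕ) (x : X) :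
    birkhoff f (fun x => φ x - β * ψ x) n x = birkhoff f φ n x - β * birkhoff f ψ n x := by
  simp only [birkhoff, Finset.sum_sub_distrib, Finset.mul_sum]

theorem birkhoff_le_mul_add {n : ℕ} {c : ℝ} {x y : X}
    (h : ∀ i < n, φ (f^[i] x) ≤ c + ψ (f^[i] y)) :
    birkhoff f φ n x ≤ n * c + birkhoff f ψ n y := by
  simpa [birkhoff, Finset.sum_add_distrib] using
    Finset.sum_le_sum fun i hi => h i (Finset.mem_range.1 hi)

theorem mul_le_birkhoff {m : ℝ} (h : ∀ x, m ≤ ψ x) (n : ℕ) (x : X) :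
    n * m ≤ birkhoff f ψ n x := by
  simpa [birkhoff] using Finset.sum_le_sum (s := Finset.range n) fun i _ => h (f^[i] x)

theorem birkhoff_le_mul {M : ℝ} (h : ∀ x, ψ x ≤ M) (n : ℕ) (x : X) :
    birkhoff f ψ n x ≤ n * M := by
  simpa [birkhoff] using Finset.sum_le_sum (s := Finset.range n) fun i _ => h (f^[i] x)

end BirkhoffSum

section PartitionSum

/-- The weighted count `∑_{x ∈ E} exp (S_n φ (x))` of which both pressures measure the growth. -/
noncomputable def partitionSum (f : X → X) (φ : X → ℝ) (n : ℕ) (E : Finset X) : ℝ :=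
  ∑ x ∈ E, Real.exp (birkhoff f φ n x)

variable {f : X → X} {φ φ' ψ : X → ℝ} {n : ℕ} {E F : Finset X}

theorem partitionSum_nonneg : 0 ≤ partitionSum f φ n E :=
  Finset.sum_nonneg fun _ _ => (Real.exp_pos _).le

theorem exp_birkhoff_le_partitionSum {x : X} (hx : x ∈ E) :
    Real.exp (birkhoff f φ n x) ≤ partitionSum f φ n E :=
  Finset.single_le_sum (f := fun x => Real.exp (birkhoff f φ n x))
    (fun _ _ => (Real.exp_pos _).le) hx

theorem partitionSum_le_card_mul {C : ℝ} (h : ∀ x, φ x ≤ C) :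
    partitionSum f φ n E ≤ E.card * Real.exp (n * C) := by
  rw [← nsmul_eq_mul]
  exact Finset.sum_le_card_nsmul _ _ _ fun x _ => Real.exp_le_exp.2 (birkhoff_le_mul h n x)

theorem partitionSum_le_exp_mul_of_injOn {g : X → X} {c : ℝ} (hgF : MapsTo g E F)
    (hg : InjOn g E) (h : ∀ x ∈ E, birkhoff f φ n x ≤ c + birkhoff f φ' n (g x)) :
    partitionSum f φ n E ≤ Real.exp c * partitionSum f φ' n F := by
  classical
  calc partitionSum f φ n E
      ≤ ∑ x ∈ E, Real.exp c * Real.exp (birkhoff f φ' n (g x)) :=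
        Finset.sum_le_sum fun x hx => by
          rw [← Real.exp_add]
          exact Real.exp_le_exp.2 (h x hx)
    _ = Real.exp c * partitionSum f φ' n (E.image g) := by
        rw [← Finset.mul_sum, partitionSum, Finset.sum_image hg]
    _ ≤ Real.exp c * partitionSum f φ' n F := by
        refine mul_le_mul_of_nonneg_left ?_ (Real.exp_pos c).le
        exact Finset.sum_le_sum_of_subset_of_nonneg (Finset.image_subset_iff.2 hgF)
          fun _ _ _ => (Real.exp_pos _).le

theorem partitionSum_le_exp_mul {c : ℝ}
    (h : ∀ x ∈ E, birkhoff f φ n x ≤ c + birkhoff f φ' n x) :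
    partitionSum f φ n E ≤ Real.exp c * partitionSum f φ' n E :=
  partitionSum_le_exp_mul_of_injOn (mapsTo_id _) (injOn_id _) h

end PartitionSum

section Level

variable {f : X → X} {φ ψ : X → ℝ} {m M T : ℝ} {n : ℕ}

theorem mul_le_of_mem_STset (h : ∀ x, m ≤ ψ x) (hn : n ∈ STset f ψ T) : n * m ≤ T := by
  obtain ⟨x, hx, -⟩ := hn
  exact (mul_le_birkhoff h n x).trans hx

theorem lt_mul_of_mem_STset (h : ∀ x, ψ x ≤ M) (hn : n ∈ STset f ψ T) : T < (n + 1) * M := by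
  obtain ⟨x, -, hx⟩ := hn
  simpa using hx.trans_le (birkhoff_le_mul h (n + 1) x)

theorem STset_subset_range (hm : 0 < m) (h : ∀ x, m ≤ ψ x) :
    STset f ψ T ⊆ Finset.range (⌊T / m⌋₊ + 1) := fun n hn => by
  rw [Finset.mem_coe, Finset.mem_range, Nat.lt_succ_iff]
  exact Nat.le_floor ((le_div_iff₀ hm).2 (mul_le_of_mem_STset h hn))

theorem exists_mem_Xset (hm : 0 < m) (h : ∀ x, m ≤ ψ x) (hT : 0 ≤ T) (x : X) :
    ∃ n, x ∈ Xset f ψ T n := by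
  classical
  have hexceeds : ∃ n : ℕ, T < birkhoff f ψ (n + 1) x := by
    obtain ⟨n, hn⟩ := exists_nat_gt (T / m)
    refine ⟨n, ((div_lt_iff₀ hm).1 hn).trans_le ((mul_le_birkhoff (f := f) h n x).trans ?_)⟩
    rw [birkhoff_succ]
    linarith [h (f^[n] x)]
  refine ⟨Nat.find hexceeds, ?_, Nat.find_spec hexceeds⟩
  rcases hk : Nat.find hexceeds with _ | k
  · simpa [birkhoff] using hT
  · exact not_lt.1 (Nat.find_min hexceeds (hk ▸ k.lt_succ_self))

theorem mem_Xset_ceil_mul (hm : 0 < m) (h : ∀ x, m ≤ ψ x) (n : ℕ) (x : X) :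
    x ∈ Xset f ψ (⌈birkhoff f ψ n x / m⌉₊ * m) n := by
  have hnonneg : 0 ≤ birkhoff f ψ n x := le_trans (by positivity) (mul_le_birkhoff h n x)
  refine ⟨(div_le_iff₀ hm).1 (Nat.le_ceil _), ?_⟩
  calc ⌈birkhoff f ψ n x / m⌉₊ * m < (birkhoff f ψ n x / m + 1) * m := by
        gcongr
        exact Nat.ceil_lt_add_one (by positivity)
    _ = birkhoff f ψ n x + m := by field_simp
    _ ≤ birkhoff f ψ (n + 1) x := by
        rw [birkhoff_succ]
        gcongr
        exact h _

theorem abs_birkhoff_sub_le {x : X} (h : ∀ x, ψ x ≤ M) (hx : x ∈ Xset f ψ T n) :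
    |birkhoff f ψ n x - T| ≤ M := by
  have hsucc := hx.2
  rw [birkhoff_succ] at hsucc
  rw [abs_le]
  constructor <;> linarith [h (f^[n] x), hx.1]

theorem mul_birkhoff_le {x : X} (h : ∀ x, ψ x ≤ M) (hx : x ∈ Xset f ψ T n) (β : ℝ) :
    β * birkhoff f ψ n x ≤ |β| * M + β * T := by
  have hsub : β * (birkhoff f ψ n x - T) ≤ |β| * M :=
    calc β * (birkhoff f ψ n x - T) ≤ |β * (birkhoff f ψ n x - T)| := le_abs_self _
      _ = |β| * |birkhoff f ψ n x - T| := abs_mul _ _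
      _ ≤ |β| * M := by gcongr; exact abs_birkhoff_sub_le h hx
  linarith

variable {E : Finset X}

theorem partitionSum_le_exp_mul_sub (h : ∀ x, ψ x ≤ M) (hE : ↑E ⊆ Xset f ψ T n) (β : ℝ) :
    partitionSum f φ n E ≤
      Real.exp (|β| * M + β * T) * partitionSum f (fun x => φ x - β * ψ x) n E :=
  partitionSum_le_exp_mul fun x hx => by
    rw [birkhoff_sub_const_mul]
    linarith [mul_birkhoff_le h (hE hx) β]

theorem partitionSum_sub_le_exp_mul (h : ∀ x, ψ x ≤ M) (hE : ↑E ⊆ Xset f ψ T n) (β : ℝ) :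
    partitionSum f (fun x => φ x - β * ψ x) n E ≤
      Real.exp (|β| * M - β * T) * partitionSum f φ n E :=
  partitionSum_le_exp_mul fun x hx => by
    have hneg := mul_birkhoff_le h (hE hx) (-β)
    rw [abs_neg] at hneg
    rw [birkhoff_sub_const_mul]
    linarith

theorem partitionSum_le_of_forall_subset_Xset [Nonempty X] (hm : 0 < m)
    (hψ : ∀ x, ψ x ∈ Icc m M) {B : ℝ}
    (hB : ∀ (k : ℕ), ∀ G ⊆ E, G.Nonempty → ↑G ⊆ Xset f ψ (k * m) n →
      partitionSum f φ n G ≤ B) (hB₀ : 0 ≤ B) :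
    partitionSum f φ n E ≤ (M / m * n + 2) * B := by
  classical
  let level : X → ℕ := fun x => ⌈birkhoff f ψ n x / m⌉₊
  have hlevel : ∀ x ∈ E, level x ∈ Finset.range (⌈M / m * n⌉₊ + 1) := fun x _ => by
    rw [Finset.mem_range, Nat.lt_succ_iff]
    refine Nat.ceil_mono ?_
    rw [div_mul_eq_mul_div, mul_comm M]
    gcongr
    exact birkhoff_le_mul (fun y => (hψ y).2) n x
  have hfiber : ∀ k, partitionSum f φ n (E.filter (level · = k)) ≤ B := fun k => by
    rcases (E.filter (level · = k)).eq_empty_or_nonempty with hempty | hne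
    · simpa [hempty, partitionSum] using hB₀
    · refine hB k _ (Finset.filter_subset _ _) hne fun x hx => ?_
      rw [← (Finset.mem_filter.1 hx).2]
      exact mem_Xset_ceil_mul hm (fun y => (hψ y).1) n x
  have hM : 0 ≤ M := by
    obtain ⟨hmψ, hψM⟩ := hψ (Classical.arbitrary X)
    exact hm.le.trans (hmψ.trans hψM)
  calc partitionSum f φ n E
      = ∑ k ∈ Finset.range (⌈M / m * n⌉₊ + 1), partitionSum f φ n (E.filter (level · = k)) :=
        (Finset.sum_fiberwise_of_maps_to hlevel _).symm
    _ ≤ (Finset.range (⌈M / m * n⌉₊ + 1)).card • B :=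
        Finset.sum_le_card_nsmul _ _ _ fun k _ => hfiber k
    _ = (⌈M / m * n⌉₊ + 1) * B := by simp
    _ ≤ (M / m * n + 2) * B := by
        refine mul_le_mul_of_nonneg_right ?_ hB₀
        linarith [Nat.ceil_lt_add_one (show 0 ≤ M / m * n by positivity)]

end Level

section BowenMetric

variable [MetricSpace X] {f : X → X} {n : ℕ}

theorem dynDist_eq_dist (f : X → X) (n : ℕ) (x y : X) :
    dynDist f n x y = dist (fun i : Fin n => f^[i] x) (fun i : Fin n => f^[i] y) :=
  le_antisymm
    (Real.iSup_le (fun i => dist_le_pi_dist (fun i : Fin n => f^[i] x) (fun i : Fin n => f^[i] y) i)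
      dist_nonneg)
    ((dist_pi_le_iff (Real.iSup_nonneg fun _ => dist_nonneg)).2
      (le_ciSup (Set.finite_range _).bddAbove))

theorem dist_iterate_le_dynDist {i : ℕ} (hi : i < n) (x y : X) :
    dist (f^[i] x) (f^[i] y) ≤ dynDist f n x y :=
  le_ciSup (f := fun i : Fin n => dist (f^[(i : ℕ)] x) (f^[(i : ℕ)] y))
    (Set.finite_range _).bddAbove ⟨i, hi⟩

theorem dynDist_self (f : X → X) (n : ℕ) (x : X) : dynDist f n x x = 0 := by
  rw [dynDist_eq_dist, dist_self]

theorem dynDist_comm (f : X → X) (n : ℕ) (x y : X) : dynDist f n x y = dynDist f n y x := by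
  simp only [dynDist_eq_dist, dist_comm]

theorem dynDist_triangle_left (f : X → X) (n : ℕ) (x y z : X) :
    dynDist f n x y ≤ dynDist f n z x + dynDist f n z y := by
  simp only [dynDist_eq_dist]
  exact dist_triangle_left _ _ _

theorem continuous_dynDist (hf : Continuous f) (n : ℕ) (x : X) :
    Continuous fun y => dynDist f n x y := by
  simp only [dynDist_eq_dist]
  exact continuous_const.dist (continuous_pi fun i => hf.iterate i)

theorem exists_isSpanningSet [CompactSpace X] (hf : Continuous f) (n : ℕ) {ε : ℝ} (hε : 0 < ε)
    (Z : Set X) : ∃ F, IsSpanningSet f n ε Z F := by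
  have hnhds : ∀ x, {y | dynDist f n x y < ε} ∈ 𝓝 x := fun x =>
    (isOpen_lt (continuous_dynDist hf n x) continuous_const).mem_nhds (by simpa [dynDist_self])
  obtain ⟨F, -, hF⟩ := isCompact_univ.elim_nhds_subcover _ fun x _ => hnhds x
  refine ⟨F, fun y _ => ?_⟩
  obtain ⟨x, hx, hxy⟩ := mem_iUnion₂.1 (hF (mem_univ y))
  exact ⟨x, hx, hxy.le⟩

variable {δ ε : ℝ} {E F : Finset X} {Z : Set X}

theorem isSeparatedSet_empty : IsSeparatedSet f n ε ∅ := by simp [IsSeparatedSet]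

theorem isSeparatedSet_singleton (x : X) : IsSeparatedSet f n ε {x} := by simp [IsSeparatedSet]

theorem IsSeparatedSet.mono (hE : IsSeparatedSet f n ε E) (hFE : F ⊆ E) :
    IsSeparatedSet f n ε F :=
  fun x hx y hy => hE x (hFE hx) y (hFE hy)

theorem IsSeparatedSet.insert [DecidableEq X] {y : X} (hE : IsSeparatedSet f n ε E)
    (hy : ∀ x ∈ E, ε < dynDist f n x y) : IsSeparatedSet f n ε (insert y E) := by
  intro a ha b hb hab
  rcases Finset.mem_insert.1 ha with rfl | haE <;> rcases Finset.mem_insert.1 hb with rfl | hbE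
  · exact absurd rfl hab
  · exact dynDist_comm f n b a ▸ hy b hbE
  · exact hy a haE
  · exact hE a haE b hbE hab

theorem IsSeparatedSet.exists_injOn (hE : IsSeparatedSet f n ε E) (hEZ : ↑E ⊆ Z)
    (hF : IsSpanningSet f n δ Z F) (hδ : 2 * δ ≤ ε) :
    ∃ g : X → X, MapsTo g E F ∧ InjOn g E ∧ ∀ x ∈ E, dynDist f n (g x) x ≤ δ := by
  have hnear : ∀ x, ∃ y, x ∈ E → y ∈ F ∧ dynDist f n y x ≤ δ := fun x => by
    by_cases hx : x ∈ E
    · exact (hF x (hEZ hx)).imp fun _ hy _ => hy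
    · exact ⟨x, fun h => absurd h hx⟩
  choose g hg using hnear
  refine ⟨g, fun x hx => (hg x hx).1, fun x hx y hy hxy => ?_, fun x hx => (hg x hx).2⟩
  by_contra hne
  have hgy := hxy ▸ (hg y hy).2
  linarith [hE x hx y hy hne, dynDist_triangle_left f n x y (g x), (hg x hx).2]

theorem IsSeparatedSet.card_le (hE : IsSeparatedSet f n ε E) (hEZ : ↑E ⊆ Z)
    (hF : IsSpanningSet f n δ Z F) (hδ : 2 * δ ≤ ε) : E.card ≤ F.card := by
  obtain ⟨g, hgF, hg, -⟩ := hE.exists_injOn hEZ hF hδ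
  exact Finset.card_le_card_of_injOn g hgF hg

theorem exists_card_le_of_isSeparatedSet [CompactSpace X] (hf : Continuous f) (n : ℕ)
    (hε : 0 < ε) : ∃ K : ℕ, ∀ E : Finset X, IsSeparatedSet f n ε E → E.card ≤ K := by
  obtain ⟨F, hF⟩ := exists_isSpanningSet hf n (half_pos hε) univ
  exact ⟨F.card, fun E hE => hE.card_le (subset_univ _) hF (mul_div_cancel₀ ε two_ne_zero).le⟩

theorem exists_isSeparatedSet_isSpanningSet [CompactSpace X] (hf : Continuous f) (n : ℕ)
    (hε : 0 < ε) (Z : Set X) :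
    ∃ E : Finset X, ↑E ⊆ Z ∧ IsSeparatedSet f n ε E ∧ IsSpanningSet f n ε Z E := by
  classical
  obtain ⟨K, hK⟩ := exists_card_le_of_isSeparatedSet hf n hε
  let S : Set (Finset X) := {E | ↑E ⊆ Z ∧ IsSeparatedSet f n ε E}
  have hfin : (Finset.card '' S).Finite :=
    (finite_Iic K).subset (image_subset_iff.2 fun E hE => hK E hE.2)
  obtain ⟨E, ⟨hEZ, hE⟩, hmax⟩ := Set.Finite.exists_maximalFor' Finset.card S hfin
    ⟨∅, by simp, isSeparatedSet_empty⟩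
  refine ⟨E, hEZ, hE, fun y hy => ?_⟩
  by_contra! hfar
  have hyE : y ∉ E := fun h => (hfar y h).not_ge (by rw [dynDist_self]; exact hε.le)
  have hinsert : insert y E ∈ S := ⟨by simpa using insert_subset hy hEZ, hE.insert hfar⟩
  have hcard : (insert y E).card ≤ E.card :=
    hmax hinsert (Finset.card_le_card (Finset.subset_insert y E))
  rw [Finset.card_insert_of_notMem hyE] at hcard
  exact Nat.not_succ_le_self _ hcard

theorem partitionSum_le_exp_mul_of_isSpanningSet {φ : X → ℝ} {η : ℝ}
    (hφ : ∀ x y, dist x y ≤ δ → dist (φ x) (φ y) ≤ η) (hE : IsSeparatedSet f n ε E)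
    (hEZ : ↑E ⊆ Z) (hF : IsSpanningSet f n δ Z F) (hδ : 2 * δ ≤ ε) :
    partitionSum f φ n E ≤ Real.exp (n * η) * partitionSum f φ n F := by
  obtain ⟨g, hgF, hg, hgx⟩ := hE.exists_injOn hEZ hF hδ
  refine partitionSum_le_exp_mul_of_injOn hgF hg fun x hx => birkhoff_le_mul_add fun i hi => ?_
  have hclose := hφ _ _ ((dist_iterate_le_dynDist hi (g x) x).trans (hgx x hx))
  rw [Real.dist_eq, abs_le] at hclose
  linarith

end BowenMetric

section SpanningQuantity

variable [MetricSpace X] {f : X → X} {φ ψ : X → ℝ} {m T ε : ℝ}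

theorem le_Qspan [CompactSpace X] (hf : Continuous f) (hm : 0 < m) (h : ∀ x, m ≤ ψ x)
    (hε : 0 < ε) {n : ℕ} (hn : n ∈ STset f ψ T) {c : ℝ}
    (hc : ∀ F, IsSpanningSet f n ε (Xset f ψ T n) F → c ≤ partitionSum f φ n F) :
    c ≤ Qspan f φ ψ T ε := by
  choose G hG using fun n => exists_isSpanningSet hf n hε (Xset f ψ T n)
  refine le_csInf ⟨_, G, fun n _ => hG n, rfl⟩ ?_
  rintro _ ⟨F, hF, rfl⟩
  set u := (STset f ψ T).indicator fun n => partitionSum f φ n (F n) with hu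
  have hsummable : Summable u := summable_of_hasFiniteSupport
    ((Finset.finite_toSet _).subset (support_indicator_subset.trans (STset_subset_range hm h)))
  have hnonneg : ∀ k, 0 ≤ u k := indicator_nonneg fun _ _ => partitionSum_nonneg
  calc c ≤ u n := by rw [hu, indicator_of_mem hn]; exact hc _ (hF n hn)
    _ ≤ ∑' k, u k := hsummable.le_tsum n fun k _ => hnonneg k

theorem Qspan_le (hm : 0 < m) (h : ∀ x, m ≤ ψ x) (hT : 0 ≤ T) {B : ℝ} (hB : 0 ≤ B)
    {F : ℕ → Finset X} (hF : ∀ n, IsSpanningSet f n ε (Xset f ψ T n) (F n))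
    (hFB : ∀ n ∈ STset f ψ T, partitionSum f φ n (F n) ≤ B) :
    Qspan f φ ψ T ε ≤ (T / m + 1) * B := by
  have hbdd : Qspan f φ ψ T ε ≤
      ∑' n, (STset f ψ T).indicator (fun n => partitionSum f φ n (F n)) n := by
    refine csInf_le ⟨0, ?_⟩ ⟨F, fun n _ => hF n, rfl⟩
    rintro _ ⟨G, -, rfl⟩
    exact tsum_nonneg (indicator_nonneg fun _ _ => partitionSum_nonneg)
  refine hbdd.trans ?_
  rw [tsum_eq_sum (s := Finset.range (⌊T / m⌋₊ + 1)) fun n hn =>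
    indicator_of_notMem (fun hnT => hn (STset_subset_range hm h hnT)) _]
  calc _ ≤ (Finset.range (⌊T / m⌋₊ + 1)).card • B :=
        Finset.sum_le_card_nsmul _ _ _ fun n _ => indicator_le' hFB (fun _ _ => hB) n
    _ = (⌊T / m⌋₊ + 1) * B := by simp
    _ ≤ (T / m + 1) * B := by
        gcongr
        exact Nat.floor_le (by positivity)

theorem Qspan_pos [CompactSpace X] [Nonempty X] (hf : Continuous f) (hφ : Continuous φ)
    (hm : 0 < m) (h : ∀ x, m ≤ ψ x) (hT : 0 ≤ T) (hε : 0 < ε) : 0 < Qspan f φ ψ T ε := by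
  obtain ⟨x⟩ := ‹Nonempty X›
  obtain ⟨C, hC⟩ := (isCompact_range hφ).bddBelow
  obtain ⟨n, hn⟩ := exists_mem_Xset (f := f) hm h hT x
  refine (Real.exp_pos (n * C)).trans_le (le_Qspan hf hm h hε ⟨x, hn⟩ fun F hF => ?_)
  obtain ⟨y, hy, -⟩ := hF x hn
  calc Real.exp (n * C) ≤ Real.exp (birkhoff f φ n y) :=
        Real.exp_le_exp.2 (mul_le_birkhoff (fun z => hC (mem_range_self z)) n y)
    _ ≤ partitionSum f φ n F := exp_birkhoff_le_partitionSum hy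

theorem partitionSum_le_exp_mul_Qspan [CompactSpace X] (hf : Continuous f) (hm : 0 < m)
    (h : ∀ x, m ≤ ψ x) {δ η : ℝ} (hδ : 0 < δ) (hδε : 2 * δ ≤ ε)
    (hη : ∀ x y, dist x y ≤ δ → dist (φ x) (φ y) ≤ η) {n : ℕ} {E : Finset X}
    (hE : IsSeparatedSet f n ε E) (hne : E.Nonempty) (hEX : ↑E ⊆ Xset f ψ T n) :
    partitionSum f φ n E ≤ Real.exp (n * η) * Qspan f φ ψ T δ := by
  have hn : n ∈ STset f ψ T := hne.imp fun _ hx => hEX hx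
  rw [← div_le_iff₀' (Real.exp_pos _)]
  refine le_Qspan hf hm h hδ hn fun F hF => ?_
  rw [div_le_iff₀' (Real.exp_pos _)]
  exact partitionSum_le_exp_mul_of_isSpanningSet hη hE hEX hF hδε

end SpanningQuantity

section Pressure

variable [MetricSpace X] [CompactSpace X] {f : X → X} {φ ψ : X → ℝ} {c : ℝ}

theorem partitionSum_le_sepSum (hf : Continuous f) (hφ : Continuous φ) {n : ℕ} {ε : ℝ}
    (hε : 0 < ε) {E : Finset X} (hE : IsSeparatedSet f n ε E) :
    partitionSum f φ n E ≤ sepSum f φ n ε := by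
  obtain ⟨K, hK⟩ := exists_card_le_of_isSeparatedSet hf n hε
  obtain ⟨C, hC⟩ := (isCompact_range hφ).bddAbove
  refine le_csSup ⟨K * Real.exp (n * C), ?_⟩ ⟨E, hE, rfl⟩
  rintro _ ⟨G, hG, rfl⟩
  refine (partitionSum_le_card_mul fun x => hC (mem_range_self x)).trans ?_
  gcongr
  exact hK G hG

theorem eventually_partitionSum_lt_of_topPressure_lt (hf : Continuous f) (hφ : Continuous φ)
    (h : topPressure f φ < c) {ε : ℝ} (hε : 0 < ε) :
    ∀ᶠ n : ℕ in atTop, ∀ E, IsSeparatedSet f n ε E →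
      partitionSum f φ n E < Real.exp (c * n) := by
  have hlim := (le_iSup₂ (f := fun (ε : ℝ) (_ : 0 < ε) => limsup (fun n : ℕ =>
    (((n : ℝ)⁻¹ * Real.log (sepSum f φ n ε) : ℝ) : EReal)) atTop) ε hε).trans_lt h
  filter_upwards [eventually_lt_exp_of_limsup_inv_mul_log_lt tendsto_natCast_atTop_atTop hlim]
    with n hn E hE
  exact (partitionSum_le_sepSum hf hφ hε hE).trans_lt hn

variable [Nonempty X]

theorem topPressure_le (hf : Continuous f) (hφ : Continuous φ)
    (h : ∀ ε > 0, ∃ a b : ℝ, ∀ᶠ n : ℕ in atTop, ∀ E, IsSeparatedSet f n ε E →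
      partitionSum f φ n E ≤ (a * n + b) * Real.exp (c * n)) :
    topPressure f φ ≤ c := by
  refine iSup₂_le fun ε hε => ?_
  obtain ⟨a, b, hab⟩ := h ε hε
  obtain ⟨x⟩ := ‹Nonempty X›
  refine limsup_inv_mul_log_le (a := a) (b := b) tendsto_natCast_atTop_atTop
    (.of_forall fun n => ?_) (hab.mono fun n hn => ?_)
  · have hx := exp_birkhoff_le_partitionSum (f := f) (φ := φ) (n := n) (Finset.mem_singleton_self x)
    exact (Real.exp_pos _).trans_le
      (hx.trans (partitionSum_le_sepSum hf hφ hε (isSeparatedSet_singleton x)))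
  · refine csSup_le ⟨_, ∅, isSeparatedSet_empty, rfl⟩ ?_
    rintro _ ⟨E, hE, rfl⟩
    exact hn E hE

theorem topPressure_add_le {φ' : X → ℝ} (hf : Continuous f) (hφ : Continuous φ)
    (hφ' : Continuous φ') (h : ∀ x, φ x + c ≤ φ' x) :
    topPressure f φ + c ≤ topPressure f φ' := by
  refine EReal.le_of_forall_lt_iff_le.1 fun a ha => ?_
  have hle : topPressure f φ ≤ ((a - c : ℝ) : EReal) := by
    refine topPressure_le hf hφ fun ε hε => ⟨0, 1, ?_⟩
    filter_upwards [eventually_partitionSum_lt_of_topPressure_lt hf hφ' ha hε] with n hn E hE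
    calc partitionSum f φ n E ≤ Real.exp (n * -c) * partitionSum f φ' n E :=
          partitionSum_le_exp_mul fun x _ => birkhoff_le_mul_add fun i _ => by
            linarith [h (f^[i] x)]
      _ ≤ Real.exp (n * -c) * Real.exp (a * n) := by gcongr; exact (hn E hE).le
      _ = (0 * n + 1) * Real.exp ((a - c) * n) := by rw [← Real.exp_add]; ring_nf
  calc topPressure f φ + c ≤ ((a - c : ℝ) : EReal) + c := by gcongr
    _ = a := by norm_cast; ring

theorem inducedPressure_le (hf : Continuous f) (hφ : Continuous φ) {m : ℝ} (hm : 0 < m)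
    (hψ : ∀ x, m ≤ ψ x)
    (h : ∀ ε > 0, ∃ a b : ℝ, ∀ᶠ T in atTop, Qspan f φ ψ T ε ≤ (a * T + b) * Real.exp (c * T)) :
    inducedPressure f φ ψ ≤ c := by
  refine iSup₂_le fun ε hε => ?_
  obtain ⟨a, b, hab⟩ := h ε hε
  exact limsup_inv_mul_log_le tendsto_id
    ((eventually_ge_atTop 0).mono fun T hT => Qspan_pos hf hφ hm hψ hT hε) hab

end Pressure

theorem eventually_Qspan_lt_of_inducedPressure_lt [MetricSpace X] {f : X → X} {φ ψ : X → ℝ}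
    {c ε : ℝ} (h : inducedPressure f φ ψ < c) (hε : 0 < ε) :
    ∀ᶠ T in atTop, Qspan f φ ψ T ε < Real.exp (c * T) :=
  eventually_lt_exp_of_limsup_inv_mul_log_lt tendsto_id
    ((le_iSup₂ (f := fun (ε : ℝ) (_ : 0 < ε) => limsup (fun T : ℝ =>
      ((T⁻¹ * Real.log (Qspan f φ ψ T ε) : ℝ) : EReal)) atTop) ε hε).trans_lt h)

section Crossing

variable [MetricSpace X] [CompactSpace X] [Nonempty X] {f : X → X} {φ ψ : X → ℝ} {β : ℝ}

theorem topPressure_sub_mul_neg_of_lt (hf : Continuous f) (hφ : Continuous φ) (hψ : Continuous ψ)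
    (hpos : ∀ x, 0 < ψ x) {γ : ℝ} (hβγ : β < γ)
    (h : topPressure f (fun x => φ x - β * ψ x) ≤ 0) :
    topPressure f (fun x => φ x - γ * ψ x) < 0 := by
  obtain ⟨m, M, hm, hψI⟩ := exists_pos_forall_mem_Icc hψ hpos
  have hdrop : topPressure f (fun x => φ x - γ * ψ x) + ((γ - β) * m : ℝ) ≤
      topPressure f (fun x => φ x - β * ψ x) :=
    topPressure_add_le hf (by fun_prop) (by fun_prop) fun x => by
      nlinarith [mul_le_mul_of_nonneg_left (hψI x).1 (sub_pos.2 hβγ).le]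
  have hgap : (0 : EReal) < ((γ - β) * m : ℝ) := by
    exact_mod_cast mul_pos (sub_pos.2 hβγ) hm
  by_contra! hnonneg
  exact hgap.not_ge ((le_add_of_nonneg_left hnonneg).trans (hdrop.trans h))

theorem inducedPressure_le_of_topPressure_sub_mul_neg (hf : Continuous f) (hφ : Continuous φ)
    (hψ : Continuous ψ) (hpos : ∀ x, 0 < ψ x) (h : topPressure f (fun x => φ x - β * ψ x) < 0) :
    inducedPressure f φ ψ ≤ β := by
  obtain ⟨m, M, hm, hψI⟩ := exists_pos_forall_mem_Icc hψ hpos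
  have hmψ : ∀ x, m ≤ ψ x := fun x => (hψI x).1
  have hψM : ∀ x, ψ x ≤ M := fun x => (hψI x).2
  have hM : 0 < M := hm.trans_le ((hmψ _).trans (hψM (Classical.arbitrary X)))
  refine inducedPressure_le hf hφ hm hmψ fun ε hε =>
    ⟨Real.exp (|β| * M) / m, Real.exp (|β| * M), ?_⟩
  obtain ⟨N, hN⟩ := eventually_atTop.1
    (eventually_partitionSum_lt_of_topPressure_lt (c := 0) hf (by fun_prop) h hε)
  filter_upwards [eventually_ge_atTop ((N + 1) * M), eventually_ge_atTop 0] with T hTN hT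
  choose F hFX hFsep hFspan using fun n =>
    exists_isSeparatedSet_isSpanningSet hf n hε (Xset f ψ T n)
  have hterm : ∀ n ∈ STset f ψ T, partitionSum f φ n (F n) ≤ Real.exp (|β| * M + β * T) := by
    intro n hn
    have hNn : N ≤ n := by
      have hlt : (N : ℝ) + 1 < n + 1 :=
        lt_of_mul_lt_mul_right (hTN.trans_lt (lt_mul_of_mem_STset hψM hn)) hM.le
      exact_mod_cast (lt_of_add_lt_add_right hlt).le
    calc partitionSum f φ n (F n)
        ≤ Real.exp (|β| * M + β * T) * partitionSum f (fun x => φ x - β * ψ x) n (F n) :=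
          partitionSum_le_exp_mul_sub hψM (hFX n) β
      _ ≤ Real.exp (|β| * M + β * T) * 1 := by
          gcongr
          simpa using (hN n hNn (F n) (hFsep n)).le
      _ = Real.exp (|β| * M + β * T) := mul_one _
  calc Qspan f φ ψ T ε ≤ (T / m + 1) * Real.exp (|β| * M + β * T) :=
        Qspan_le hm hmψ hT (Real.exp_pos _).le hFspan hterm
    _ = (Real.exp (|β| * M) / m * T + Real.exp (|β| * M)) * Real.exp (β * T) := by
        rw [Real.exp_add]
        ring

theorem topPressure_sub_mul_nonpos_of_inducedPressure_lt (hf : Continuous f) (hφ : Continuous φ)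
    (hψ : Continuous ψ) (hpos : ∀ x, 0 < ψ x) (h : inducedPressure f φ ψ < β) :
    topPressure f (fun x => φ x - β * ψ x) ≤ 0 := by
  obtain ⟨m, M, hm, hψI⟩ := exists_pos_forall_mem_Icc hψ hpos
  have hmψ : ∀ x, m ≤ ψ x := fun x => (hψI x).1
  have hψM : ∀ x, ψ x ≤ M := fun x => (hψI x).2
  refine EReal.le_of_forall_lt_iff_le.1 fun η hη => ?_
  refine topPressure_le hf (by fun_prop) fun ε hε =>
    ⟨M / m * Real.exp (|β| * M), 2 * Real.exp (|β| * M), ?_⟩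
  obtain ⟨δ, hδ, hδε, hφδ⟩ : ∃ δ > 0, 2 * δ ≤ ε ∧ ∀ x y, dist x y ≤ δ → dist (φ x) (φ y) ≤ η := by
    obtain ⟨δ, hδ, hφδ⟩ := Metric.uniformContinuous_iff_le.1
      (CompactSpace.uniformContinuous_of_continuous hφ) η (EReal.coe_pos.1 hη)
    exact ⟨min δ (ε / 2), by positivity, by linarith [min_le_right δ (ε / 2)],
      fun x y hxy => hφδ (hxy.trans (min_le_left _ _))⟩
  obtain ⟨T₀, hT₀⟩ := eventually_atTop.1 (eventually_Qspan_lt_of_inducedPressure_lt h hδ)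
  filter_upwards [tendsto_natCast_atTop_atTop.eventually_ge_atTop (T₀ / m)] with n hn E hE
  have hlevel : ∀ (k : ℕ), ∀ G ⊆ E, G.Nonempty → ↑G ⊆ Xset f ψ (k * m) n →
      partitionSum f (fun x => φ x - β * ψ x) n G ≤ Real.exp (|β| * M + n * η) := by
    intro k G hGE hne hGX
    have hTk : T₀ ≤ k * m :=
      ((div_le_iff₀ hm).1 hn).trans (mul_le_of_mem_STset hmψ (hne.imp fun _ hx => hGX hx))
    calc partitionSum f (fun x => φ x - β * ψ x) n G
        ≤ Real.exp (|β| * M - β * (k * m)) * partitionSum f φ n G :=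
          partitionSum_sub_le_exp_mul hψM hGX β
      _ ≤ Real.exp (|β| * M - β * (k * m)) * (Real.exp (n * η) * Qspan f φ ψ (k * m) δ) := by
          gcongr
          exact partitionSum_le_exp_mul_Qspan hf hm hmψ hδ hδε hφδ (hE.mono hGE) hne hGX
      _ ≤ Real.exp (|β| * M - β * (k * m)) * (Real.exp (n * η) * Real.exp (β * (k * m))) := by
          gcongr
          exact (hT₀ _ hTk).le
      _ = Real.exp (|β| * M + n * η) := by
          rw [← Real.exp_add, ← Real.exp_add]
          ring_nf
  calc partitionSum f (fun x => φ x - β * ψ x) n E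
      ≤ (M / m * n + 2) * Real.exp (|β| * M + n * η) :=
        partitionSum_le_of_forall_subset_Xset hm hψI hlevel (Real.exp_pos _).le
    _ = (M / m * Real.exp (|β| * M) * n + 2 * Real.exp (|β| * M)) * Real.exp (η * n) := by
        rw [Real.exp_add, mul_comm η]
        ring

end Crossing

/-- `P_ψ(φ) = inf{β : P(φ-βψ) ≤ 0} = sup{β : P(φ-βψ) ≥ 0}`. -/
theorem stmt9 [MetricSpace X] [CompactSpace X] [Nonempty X]
    (f : X → X) (φ ψ : X → ℝ) (hf : Continuous f) (hφ : Continuous φ) (hψ : Continuous ψ)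
    (hpos : ∀ x, 0 < ψ x) :
    inducedPressure f φ ψ =
        sInf { b : EReal | ∃ β : ℝ, b = (β : EReal) ∧
          topPressure f (fun x => φ x - β * ψ x) ≤ 0 } ∧
    inducedPressure f φ ψ =
        sSup { b : EReal | ∃ β : ℝ, b = (β : EReal) ∧
          0 ≤ topPressure f (fun x => φ x - β * ψ x) } := by
  exact eq_sInf_and_eq_sSup_of_crossing
    (fun _ _ => topPressure_sub_mul_neg_of_lt hf hφ hψ hpos)
    (fun _ => inducedPressure_le_of_topPressure_sub_mul_neg hf hφ hψ hpos)
    (fun _ => topPressure_sub_mul_nonpos_of_inducedPressure_lt hf hφ hψ hpos)
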